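/- There exists a 2-(24,4,1) packing with 42 blocks whose leave is a vertex-disjoint union of one cycle of length 11 and one cycle of length 13, covering all 24 points (leave type 11^1 13^1). -/

import Mathlib

/-!
The packing is given explicitly, with points labelled so that the leave consists of the cycles
`0, 1, …, 10` and `11, 12, …, 23`, each in cyclic order. Any two of its 42 blocks meet in at most
one point, so they cover `42 * 6 = 252` of the 276 pairs of points; the remaining 24 pairs are the
`11 + 13` edges of the two cycles.
-/

/-- A 2-(24,4,1) packing: a collection of 4-element blocks on 24 points such that
every pair of distinct points lies in at most one block. -/
def IsPacking (B : Finset (Finset (Fin 24))) : Prop :=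
  (∀ b ∈ B, b.card = 4) ∧
  ∀ p q : Fin 24, p ≠ q → ∀ b₁ ∈ B, ∀ b₂ ∈ B,
    p ∈ b₁ → q ∈ b₁ → p ∈ b₂ → q ∈ b₂ → b₁ = b₂

/-- Adjacency in the leave of a packing: the pair of distinct points is covered by no block. -/
def LeaveAdj (B : Finset (Finset (Fin 24))) (p q : Fin 24) : Prop :=
  p ≠ q ∧ ∀ b ∈ B, ¬ (p ∈ b ∧ q ∈ b)

/-- The leave of the packing `B` is a vertex-disjoint union of cycles whose lengths are
given by the list `L`, covering all 24 points. -/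
def LeaveIsCycleType (B : Finset (Finset (Fin 24))) (L : List ℕ) : Prop :=
  ∃ f : (i : Fin L.length) → ZMod (L.get i) → Fin 24,
    Function.Bijective (fun x : Σ i : Fin L.length, ZMod (L.get i) => f x.1 x.2) ∧
    ∀ p q : Fin 24, LeaveAdj B p q ↔
      ∃ i k, (p = f i k ∧ q = f i (k + 1)) ∨ (q = f i k ∧ p = f i (k + 1))

open Finset

theorem isPacking_of_pairwise_card_inter_le_one {B : Finset (Finset (Fin 24))}
    (hcard : ∀ b ∈ B, #b = 4) (hB : (B : Set (Finset (Fin 24))).Pairwise fun b c => #(b ∩ c) ≤ 1) :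
    IsPacking B := by
  refine ⟨hcard, fun p q hpq b hb c hc hpb hqb hpc hqc => ?_⟩
  by_contra hbc
  exact hpq (card_le_one.1 (hB hb hc hbc) p (mem_inter.2 ⟨hpb, hpc⟩) q (mem_inter.2 ⟨hqb, hqc⟩))

theorem nodup_of_pairwise_card_inter_le_one {α : Type*} [DecidableEq α] {l : List (Finset α)}
    (hcard : ∀ b ∈ l, 1 < #b) (hl : l.Pairwise fun b c => #(b ∩ c) ≤ 1) : l.Nodup :=
  hl.imp_of_mem fun {b c} hb _ hbc heq => by
    rw [← heq, inter_self] at hbc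
    exact hbc.not_gt (hcard b hb)

theorem leaveIsCycleType_of_equiv {B : Finset (Finset (Fin 24))} {L : List ℕ}
    (e : (Σ i : Fin L.length, ZMod (L.get i)) ≃ Fin 24) {succ : Fin 24 → Fin 24}
    (he : ∀ i k, e ⟨i, k + 1⟩ = succ (e ⟨i, k⟩))
    (hB : ∀ p q, LeaveAdj B p q ↔ q = succ p ∨ p = succ q) : LeaveIsCycleType B L := by
  refine ⟨fun i k => e ⟨i, k⟩, e.bijective, fun p q => ?_⟩
  simp only [he, hB]
  constructor
  · rintro (rfl | rfl)
    · obtain ⟨⟨i, k⟩, rfl⟩ := e.surjective p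
      exact ⟨i, k, .inl ⟨rfl, rfl⟩⟩
    · obtain ⟨⟨i, k⟩, rfl⟩ := e.surjective q
      exact ⟨i, k, .inr ⟨rfl, rfl⟩⟩
  · rintro ⟨i, k, ⟨rfl, hq⟩ | ⟨rfl, hp⟩⟩
    · exact .inl hq
    · exact .inr hp

/-- The labelling of the vertices of disjoint cycles of lengths `L` by `0, 1, …, n - 1`, one cycle
after the other, each in cyclic order. -/
def consecutiveCycles (L : List ℕ) [∀ i, NeZero (L.get i)] {n : ℕ} (hn : L.sum = n) :
    (Σ i : Fin L.length, ZMod (L.get i)) ≃ Fin n :=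
  calc
    _ ≃ Σ i : Fin L.length, Fin (L.get i) :=
      Equiv.sigmaCongrRight fun i => (ZMod.finEquiv (L.get i)).symm.toEquiv
    _ ≃ Fin (∑ i, L.get i) := finSigmaFinEquiv
    _ ≃ Fin n := finCongr ((Fin.sum_univ_getElem L).trans hn)

/-- The blocks of a packing with leave of type `11^1 13^1`. They are listed, rather than collected
in a `Finset`, because evaluating a nested `insert` of sets in the kernel is too slow. -/
def blocks : List (Finset (Fin 24)) :=
  [{0, 2, 15, 22}, {0, 3, 12, 17}, {0, 4, 8, 18}, {0, 5, 7, 13}, {0, 6, 19, 21}, {0, 9, 14, 23},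
   {0, 11, 16, 20}, {1, 3, 11, 13}, {1, 4, 16, 22}, {1, 5, 14, 18}, {1, 6, 12, 15},
   {1, 7, 9, 21}, {1, 8, 10, 19}, {1, 17, 20, 23}, {2, 4, 7, 23}, {2, 5, 12, 19}, {2, 6, 9, 17},
   {2, 8, 11, 14}, {2, 10, 13, 20}, {2, 16, 18, 21}, {3, 5, 9, 22}, {3, 6, 8, 16},
   {3, 7, 18, 20}, {3, 10, 14, 21}, {3, 15, 19, 23}, {4, 6, 10, 11}, {4, 9, 12, 20},
   {4, 13, 15, 21}, {4, 14, 17, 19}, {5, 8, 15, 20}, {5, 10, 16, 23}, {5, 11, 17, 21},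
   {6, 13, 18, 23}, {6, 14, 20, 22}, {7, 10, 15, 17}, {7, 11, 19, 22}, {7, 12, 14, 16},
   {8, 12, 21, 23}, {8, 13, 17, 22}, {9, 11, 15, 18}, {9, 13, 16, 19}, {10, 12, 18, 22}]

/-- The successor of a point on its cycle of the leave of `blocks`. -/
def leaveSucc (p : Fin 24) : Fin 24 :=
  if p = 10 then 0 else if p = 23 then 11 else p + 1

theorem card_of_mem_blocks : ∀ b ∈ blocks, #b = 4 := by
  simp [blocks]

theorem pairwise_card_inter_blocks_le_one : blocks.Pairwise fun b c => #(b ∩ c) ≤ 1 := by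
  decide +kernel

theorem nodup_blocks : blocks.Nodup :=
  nodup_of_pairwise_card_inter_le_one (fun b hb => by simp [card_of_mem_blocks b hb])
    pairwise_card_inter_blocks_le_one

theorem isPacking_blocks : IsPacking blocks.toFinset := by
  refine isPacking_of_pairwise_card_inter_le_one
    (fun b hb => card_of_mem_blocks b (List.mem_toFinset.1 hb)) ?_
  rw [List.coe_toFinset]
  have : Std.Symm fun b c : Finset (Fin 24) => #(b ∩ c) ≤ 1 := ⟨fun b c h => by rwa [inter_comm]⟩
  exact nodup_blocks.pairwise_coe.2 pairwise_card_inter_blocks_le_one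

theorem card_toFinset_blocks : #blocks.toFinset = 42 :=
  List.toFinset_card_of_nodup nodup_blocks

theorem eq_or_exists_mem_blocks_iff : ∀ p q,
    (p = q ∨ ∃ b ∈ blocks, p ∈ b ∧ q ∈ b) ↔ ¬ (q = leaveSucc p ∨ p = leaveSucc q) := by
  decide +kernel

theorem leaveAdj_blocks_iff (p q : Fin 24) :
    LeaveAdj blocks.toFinset p q ↔ q = leaveSucc p ∨ p = leaveSucc q :=
  calc
    _ ↔ ¬ (p = q ∨ ∃ b ∈ blocks, p ∈ b ∧ q ∈ b) := by simp [LeaveAdj]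
    _ ↔ _ := by rw [eq_or_exists_mem_blocks_iff, not_not]

instance neZero_get_eleven_thirteen (i : Fin [11, 13].length) : NeZero ([11, 13].get i) :=
  ⟨by revert i; decide⟩

theorem consecutiveCycles_add_one : ∀ i k,
    consecutiveCycles [11, 13] (n := 24) rfl ⟨i, k + 1⟩ =
      leaveSucc (consecutiveCycles [11, 13] rfl ⟨i, k⟩) := by
  refine Fin.forall_fin_two.2 ⟨?_, ?_⟩
  · change ∀ k : Fin 11, _
    decide +kernel
  · change ∀ k : Fin 13, _
    decide +kernel

/-- There is a 2-(24,4,1) packing with 42 blocks whose leave is a vertex-disjoint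
union of cycles of lengths [11, 13], covering all 24 points. -/
theorem exists_max_packing_with_leave_type :
    ∃ B : Finset (Finset (Fin 24)), IsPacking B ∧ B.card = 42 ∧
      LeaveIsCycleType B [11, 13] :=
  ⟨blocks.toFinset, isPacking_blocks, card_toFinset_blocks,
    leaveIsCycleType_of_equiv _ consecutiveCycles_add_one leaveAdj_blocks_iff⟩
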